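/- arXiv:2310.17267 — 4 statements merged into one kernel-verified Lean document; each statement's English description precedes it below -/
import Mathlib

section
/- Let A be an invertible 3×3 real matrix, let λ₃ be the largest eigenvalue of the Cauchy–Green tensor C = AᵀA, and let ξ₃ be a unit eigenvector of C for λ₃. Then for every nonzero vector w ∈ ℝ³, the unit vector e_w = w/|w| satisfies ⟨e_w, ξ₃⟩² ≤ |Aw|² / (λ₃ |w|²). (With A = ∇F_{t₀}^{t}(x₀) and w the initial vorticity, the right-hand side equals exp[2(VSE_{t₀}^{t} − FTLE_{t₀}^{t})(t − t₀)].) -/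
open scoped RealInnerProductSpace
open Matrix MeasureTheory Filter

/-- Action of a 3×3 real matrix on `ℝ³` with the Euclidean inner product. -/
noncomputable def mulE (A : Matrix (Fin 3) (Fin 3) ℝ) (x : EuclideanSpace ℝ (Fin 3)) :
    EuclideanSpace ℝ (Fin 3) :=
  Matrix.toEuclideanLin A x

/-- for `λ₃` the largest eigenvalue of `C = AᵀA` with unit eigenvector `ξ₃`
and any nonzero `w`, the unit vector `e_w = w/|w|` satisfies
`⟨e_w, ξ₃⟩² ≤ |Aw|² / (λ₃ |w|²)`. -/
theorem stmt_1 (A : Matrix (Fin 3) (Fin 3) ℝ) (hA : IsUnit A)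
    (lam3 : ℝ) (xi3 : EuclideanSpace ℝ (Fin 3)) (hunit : ‖xi3‖ = 1)
    (heig : mulE (Aᵀ * A) xi3 = lam3 • xi3)
    (hmax : ∀ (μ : ℝ) (v : EuclideanSpace ℝ (Fin 3)), v ≠ 0 →
      mulE (Aᵀ * A) v = μ • v → μ ≤ lam3)
    (w : EuclideanSpace ℝ (Fin 3)) (hw : w ≠ 0) :
    ⟪‖w‖⁻¹ • w, xi3⟫ ^ 2 ≤ ‖mulE A w‖ ^ 2 / (lam3 * ‖w‖ ^ 2) := by
  have key : ∀ u : EuclideanSpace ℝ (Fin 3), ⟪mulE A u, mulE A xi3⟫ = lam3 * ⟪u, xi3⟫ := by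
    intro u
    rw [← real_inner_smul_right, ← heig]
    simp only [mulE, EuclideanSpace.inner_eq_star_dotProduct, Matrix.ofLp_toLpLin,
      Matrix.toLin'_apply, star_trivial]
    rw [← Matrix.mulVec_mulVec, dotProduct_comm (Aᵀ *ᵥ _), Matrix.dotProduct_mulVec,
      Matrix.mulVec_transpose, dotProduct_comm]
  have hn : ‖mulE A xi3‖ ^ 2 = lam3 := by
    rw [← real_inner_self_eq_norm_sq, key, real_inner_self_eq_norm_sq, hunit]; ring
  have hne : mulE A xi3 ≠ 0 := by
    intro h
    have h1 : A *ᵥ (WithLp.ofLp xi3) = 0 := by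
      have := congrArg WithLp.ofLp h
      simpa [mulE] using this
    have h2 : WithLp.ofLp xi3 = 0 :=
      Matrix.mulVec_injective_of_isUnit hA (by simpa using h1)
    have h3 : xi3 = 0 := by ext i; simp [h2]
    simp [h3] at hunit
  have hpos : 0 < lam3 := by
    rw [← hn]; exact pow_pos (norm_pos_iff.mpr hne) 2
  have hwp : 0 < ‖w‖ := norm_pos_iff.mpr hw
  have hcs := abs_real_inner_le_norm (mulE A w) (mulE A xi3)
  have hsq : (lam3 * ⟪w, xi3⟫) ^ 2 ≤ ‖mulE A w‖ ^ 2 * lam3 := by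
    rw [← key w, ← sq_abs]
    calc _ ≤ (‖mulE A w‖ * ‖mulE A xi3‖) ^ 2 := by gcongr
      _ = _ := by rw [mul_pow, hn]
  have h4 : lam3 * ⟪w, xi3⟫ ^ 2 ≤ ‖mulE A w‖ ^ 2 := by
    refine le_of_mul_le_mul_right ?_ hpos
    nlinarith [hsq]
  rw [real_inner_smul_left, le_div_iff₀ (by positivity)]
  calc _ = lam3 * ⟪w, xi3⟫ ^ 2 := by field_simp
    _ ≤ _ := h4
end

section
/- (Theorem 1, forward half.) Fix t₀ ∈ ℝ and ω₀ ∈ ℝ³. Let A : [t₀, ∞) → GL(3, ℝ) be a family of invertible 3×3 matrices with A(t₀) = Id; for each t let λ₃(t) be the largest eigenvalue of A(t)ᵀA(t) and ξ₃(t) a unit eigenvector for λ₃(t). Assume: (i) the trajectory vorticity ω(t) = A(t) ω₀ is uniformly bounded, i.e. there is M with |A(t) ω₀| ≤ M for all t ≥ t₀; (ii) the maximal forward Lyapunov exponent exists and is positive, i.e. (1/(2(t−t₀))) log λ₃(t) → μ₃⁺ with 0 < μ₃⁺ < ∞ as t → ∞; (iii) the dominant forward Lyapunov vector exists, ξ₃(t)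 → ζ₃⁺ as t → ∞. Then ⟨ω₀, ζ₃⁺⟩ = 0. -/
open scoped RealInnerProductSpace
open Matrix MeasureTheory Filter

theorem inner_mulE_aux (A : Matrix (Fin 3) (Fin 3) ℝ) (v w : EuclideanSpace ℝ (Fin 3)) :
    ⟪v, mulE (Aᵀ * A) w⟫ = ⟪mulE A v, mulE A w⟫ := by
  simp [mulE, Matrix.toLpLin_apply, PiLp.inner_apply, Matrix.mulVec, dotProduct,
    Matrix.mul_apply, Fin.sum_univ_three]
  ring

/-- Theorem 1, forward half: if the vorticity `ω(t) = A(t) ω₀` is uniformly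
bounded, the maximal forward Lyapunov exponent exists and is positive, and the dominant
forward Lyapunov vector `ζ₃⁺` exists, then `⟨ω₀, ζ₃⁺⟩ = 0`. -/
theorem stmt_2 (t₀ : ℝ) (ω₀ : EuclideanSpace ℝ (Fin 3))
    (A : ℝ → Matrix (Fin 3) (Fin 3) ℝ)
    (hAinv : ∀ t, t₀ ≤ t → IsUnit (A t)) (hA0 : A t₀ = 1)
    (lam3 : ℝ → ℝ) (xi3 : ℝ → EuclideanSpace ℝ (Fin 3))
    (hunit : ∀ t, t₀ ≤ t → ‖xi3 t‖ = 1)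
    (heig : ∀ t, t₀ ≤ t → mulE ((A t)ᵀ * A t) (xi3 t) = lam3 t • xi3 t)
    (hmax : ∀ t, t₀ ≤ t → ∀ (μ : ℝ) (v : EuclideanSpace ℝ (Fin 3)), v ≠ 0 →
      mulE ((A t)ᵀ * A t) v = μ • v → μ ≤ lam3 t)
    (M : ℝ) (hbound : ∀ t, t₀ ≤ t → ‖mulE (A t) ω₀‖ ≤ M)
    (μ₃ : ℝ) (hμpos : 0 < μ₃)
    (hLyap : Tendsto (fun t => Real.log (lam3 t) / (2 * (t - t₀))) atTop (nhds μ₃))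
    (ζ₃ : EuclideanSpace ℝ (Fin 3)) (hvec : Tendsto xi3 atTop (nhds ζ₃)) :
    ⟪ω₀, ζ₃⟫ = 0 := by
  have hnn : ∀ t, t₀ ≤ t → lam3 t = ‖mulE (A t) (xi3 t)‖ ^ 2 := by
    intro t ht
    have h := inner_mulE_aux (A t) (xi3 t) (xi3 t)
    rw [heig t ht, real_inner_smul_right, real_inner_self_eq_norm_sq,
      real_inner_self_eq_norm_sq, hunit t ht] at h
    linarith
  have hkey : ∀ t, t₀ ≤ t → 0 < lam3 t → ⟪ω₀, xi3 t⟫ ^ 2 ≤ M ^ 2 / lam3 t := by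
    intro t ht hpos
    have h := inner_mulE_aux (A t) ω₀ (xi3 t)
    rw [heig t ht, real_inner_smul_right] at h
    have hc := abs_real_inner_le_norm (mulE (A t) ω₀) (mulE (A t) (xi3 t))
    rw [← h] at hc
    have h2 := hc.trans (mul_le_mul_of_nonneg_right (hbound t ht) (norm_nonneg _))
    have h3 := pow_le_pow_left₀ (abs_nonneg _) h2 2
    rw [sq_abs, mul_pow, mul_pow, ← hnn t ht] at h3
    rw [le_div_iff₀ hpos]
    have h4 : (⟪ω₀, xi3 t⟫ ^ 2 * lam3 t) * lam3 t ≤ M ^ 2 * lam3 t := by linarith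
    exact le_of_mul_le_mul_right h4 hpos
  have hlog : Tendsto (fun t => Real.log (lam3 t)) atTop atTop := by
    have h1 : Tendsto (fun t : ℝ => 2 * (t - t₀)) atTop atTop :=
      (tendsto_atTop_add_const_right atTop (-t₀) tendsto_id).const_mul_atTop two_pos
    refine (hLyap.pos_mul_atTop hμpos h1).congr' ?_
    filter_upwards [eventually_gt_atTop t₀] with t ht
    have : 2 * (t - t₀) ≠ 0 := mul_ne_zero two_ne_zero (sub_pos.2 ht).ne'
    exact div_mul_cancel₀ _ this
  have hlam : Tendsto lam3 atTop atTop := by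
    refine tendsto_atTop_mono' _ ?_ hlog
    filter_upwards [eventually_ge_atTop t₀] with t ht
    exact Real.log_le_self (by rw [hnn t ht]; positivity)
  have hz : Tendsto (fun t => ⟪ω₀, xi3 t⟫ ^ 2) atTop (nhds 0) := by
    refine squeeze_zero' (Eventually.of_forall fun t => sq_nonneg _) ?_
      (hlam.const_div_atTop (M ^ 2))
    filter_upwards [eventually_ge_atTop t₀, hlam.eventually_gt_atTop 0] with t ht hp
    exact hkey t ht hp
  have hl : Tendsto (fun t => ⟪ω₀, xi3 t⟫ ^ 2) atTop (nhds (⟪ω₀, ζ₃⟫ ^ 2)) :=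
    (tendsto_const_nhds.inner hvec).pow 2
  exact pow_eq_zero_iff two_ne_zero |>.1 (tendsto_nhds_unique hl hz)
end

section
/- (Theorem 1.) Fix t₀ ∈ ℝ and a nonzero ω₀ ∈ ℝ³. Let A : ℝ → GL(3, ℝ) be a family of invertible 3×3 matrices with A(t₀) = Id; for each t let λ₃(t) be the largest eigenvalue of A(t)ᵀA(t) and ξ₃(t) a unit eigenvector for λ₃(t). Assume: (i) |A(t) ω₀| ≤ M < ∞ for all t ∈ ℝ; (ii) the maximal forward and backward Lyapunov exponents exist and are positive: (1/(2(t−t₀))) log λ₃(t) → μ₃^± with 0 < μ₃^± < ∞ as t → ±∞; (iii) the dominant forward and backward Lyapunov vectors exist: ξ₃(t) → ζ₃^± as t → ±∞; (iv) the non-degeneracy condition ζ₃⁺ ∦ ζ₃⁻ holds. Define n = ζ₃⁺ × ζ₃⁻. Then ω₀ is parallel to n, i.e. there exists c ∈ ℝ with ω₀ = c · n. -/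
open scoped RealInnerProductSpace
open Matrix MeasureTheory Filter

/-- Cross product on `ℝ³` viewed as a Euclidean space. -/
noncomputable def cross3 (x y : EuclideanSpace ℝ (Fin 3)) : EuclideanSpace ℝ (Fin 3) :=
  (WithLp.equiv 2 (Fin 3 → ℝ)).symm
    (crossProduct ((WithLp.equiv 2 (Fin 3 → ℝ)) x) ((WithLp.equiv 2 (Fin 3 → ℝ)) y))

lemma aux_inner (A : Matrix (Fin 3) (Fin 3) ℝ) (x y : EuclideanSpace ℝ (Fin 3)) :
    ⟪mulE (Aᵀ * A) x, y⟫ = ⟪mulE A x, mulE A y⟫ := by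
  simp [mulE, Matrix.toLpLin_apply, EuclideanSpace.inner_eq_star_dotProduct, Matrix.mulVec, dotProduct,
    Fin.sum_univ_three, Matrix.mul_apply]
  ring

lemma aux_orth (t₀ : ℝ) (ω₀ : EuclideanSpace ℝ (Fin 3))
    (A : ℝ → Matrix (Fin 3) (Fin 3) ℝ)
    (lam3 : ℝ → ℝ) (xi3 : ℝ → EuclideanSpace ℝ (Fin 3))
    (hunit : ∀ t, ‖xi3 t‖ = 1)
    (heig : ∀ t, mulE ((A t)ᵀ * A t) (xi3 t) = lam3 t • xi3 t)
    (M : ℝ) (hbound : ∀ t, ‖mulE (A t) ω₀‖ ≤ M)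
    (μ : ℝ) (hμ : 0 < μ) (l : Filter ℝ) [l.NeBot]
    (hl : Tendsto (fun t => |t - t₀|) l atTop)
    (hLyap : Tendsto (fun t => Real.log (lam3 t) / (2 * |t - t₀|)) l (nhds μ))
    (ζ : EuclideanSpace ℝ (Fin 3))
    (hvec : Tendsto xi3 l (nhds ζ)) : ⟪ζ, ω₀⟫ = 0 := by
  have hlam : ∀ t, lam3 t = ‖mulE (A t) (xi3 t)‖ ^ 2 := by
    intro t
    have h := aux_inner (A t) (xi3 t) (xi3 t)
    rw [heig, real_inner_smul_left, real_inner_self_eq_norm_sq, real_inner_self_eq_norm_sq,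
      hunit] at h
    linarith
  have hkey : ∀ t, lam3 t * ⟪xi3 t, ω₀⟫ ^ 2 ≤ M ^ 2 := by
    intro t
    have h := aux_inner (A t) (xi3 t) ω₀
    rw [heig, real_inner_smul_left] at h
    have h2 := abs_real_inner_le_norm (mulE (A t) (xi3 t)) (mulE (A t) ω₀)
    rw [← h] at h2
    have h3 : (lam3 t * ⟪xi3 t, ω₀⟫) ^ 2 ≤ lam3 t * M ^ 2 := by
      rw [← sq_abs]
      calc _ ≤ (‖mulE (A t) (xi3 t)‖ * ‖mulE (A t) ω₀‖) ^ 2 := by gcongr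
        _ = lam3 t * ‖mulE (A t) ω₀‖ ^ 2 := by rw [mul_pow, ← hlam]
        _ ≤ _ := by
          have := hbound t
          have : 0 ≤ lam3 t := by rw [hlam]; positivity
          gcongr
    have h0 : 0 ≤ lam3 t := by rw [hlam]; positivity
    rcases h0.eq_or_lt with h0 | h0
    · rw [← h0]; nlinarith [sq_nonneg M]
    · refine le_of_mul_le_mul_left ?_ h0
      linarith
  have hlog : Tendsto (fun t => Real.log (lam3 t)) l atTop := by
    have h := hLyap.pos_mul_atTop hμ (hl.const_mul_atTop (two_pos))
    refine h.congr' ?_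
    filter_upwards [hl.eventually_gt_atTop 0] with t ht
    field_simp
  have hlamT : Tendsto lam3 l atTop := by
    refine tendsto_atTop_mono' l ?_ hlog
    filter_upwards with t
    exact Real.log_le_self (by rw [hlam]; positivity)
  have h1 : Tendsto (fun t => ⟪xi3 t, ω₀⟫ ^ 2) l (nhds (⟪ζ, ω₀⟫ ^ 2)) :=
    (hvec.inner tendsto_const_nhds).pow 2
  have h2 : Tendsto (fun t => M ^ 2 / lam3 t) l (nhds 0) := hlamT.const_div_atTop _
  have h3 : ⟪ζ, ω₀⟫ ^ 2 ≤ 0 := by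
    refine le_of_tendsto_of_tendsto h1 h2 ?_
    filter_upwards [hlamT.eventually_gt_atTop 0] with t ht
    rw [le_div_iff₀ ht]
    linarith [hkey t]
  exact pow_eq_zero_iff two_ne_zero |>.1 (le_antisymm h3 (sq_nonneg _))

lemma aux_cross (p q w : EuclideanSpace ℝ (Fin 3)) (h : LinearIndependent ℝ ![p, q])
    (hp : ⟪p, w⟫ = 0) (hq : ⟪q, w⟫ = 0) : ∃ c : ℝ, w = c • cross3 p q := by
  have hne : cross3 p q ≠ 0 := by
    have h' := h.map' (WithLp.linearEquiv 2 ℝ (Fin 3 → ℝ)).toLinearMap (LinearEquiv.ker _)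
    have e : (WithLp.linearEquiv 2 ℝ (Fin 3 → ℝ)).toLinearMap ∘ ![p, q] = ![p.ofLp, q.ofLp] := by
      ext i; fin_cases i <;> rfl
    rw [e] at h'
    have h2 := crossProduct_ne_zero_iff_linearIndependent.2 h'
    intro h0
    apply h2
    exact congrArg WithLp.ofLp h0
  have hn : ‖cross3 p q‖ ^ 2 ≠ 0 := by simpa using hne
  refine ⟨⟪cross3 p q, w⟫ / ‖cross3 p q‖ ^ 2, ?_⟩
  have key : ‖cross3 p q‖ ^ 2 • w = ⟪cross3 p q, w⟫ • cross3 p q := by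
    rw [← real_inner_self_eq_norm_sq]
    simp only [EuclideanSpace.inner_eq_star_dotProduct, dotProduct, Fin.sum_univ_three] at hp hq ⊢
    simp [cross3, crossProduct] at hp hq ⊢
    ext i
    fin_cases i
    all_goals simp
    · linear_combination ((p 2*q 0 - p 0*q 2)*p 2 - (p 0*q 1-p 1*q 0)*p 1) * hq - ((p 2*q 0 - p 0*q 2)*q 2 - (p 0*q 1-p 1*q 0)*q 1) * hp
    · linear_combination ((p 0*q 1 - p 1*q 0)*p 0 - (p 1*q 2-p 2*q 1)*p 2) * hq - ((p 0*q 1 - p 1*q 0)*q 0 - (p 1*q 2-p 2*q 1)*q 2) * hp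
    · linear_combination ((p 1*q 2 - p 2*q 1)*p 1 - (p 2*q 0-p 0*q 2)*p 0) * hq - ((p 1*q 2 - p 2*q 1)*q 1 - (p 2*q 0-p 0*q 2)*q 0) * hp
  rw [div_eq_inv_mul, mul_smul, ← key, smul_smul, inv_mul_cancel₀ hn, one_smul]

/-- Theorem 1: with bounded vorticity `ω(t) = A(t) ω₀`, positive forward and
backward maximal Lyapunov exponents, existing dominant forward/backward Lyapunov vectors
`ζ₃^±` that are not parallel, the vorticity `ω₀` is parallel to `n = ζ₃⁺ × ζ₃⁻`.
(The Lyapunov exponents are `lim_{t→±∞} log λ₃(t) / (2|t−t₀|)`, as in the paper.) -/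
theorem stmt_3 (t₀ : ℝ) (ω₀ : EuclideanSpace ℝ (Fin 3)) (hω₀ : ω₀ ≠ 0)
    (A : ℝ → Matrix (Fin 3) (Fin 3) ℝ)
    (hAinv : ∀ t, IsUnit (A t)) (hA0 : A t₀ = 1)
    (lam3 : ℝ → ℝ) (xi3 : ℝ → EuclideanSpace ℝ (Fin 3))
    (hunit : ∀ t, ‖xi3 t‖ = 1)
    (heig : ∀ t, mulE ((A t)ᵀ * A t) (xi3 t) = lam3 t • xi3 t)
    (hmax : ∀ t, ∀ (μ : ℝ) (v : EuclideanSpace ℝ (Fin 3)), v ≠ 0 →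
      mulE ((A t)ᵀ * A t) v = μ • v → μ ≤ lam3 t)
    (M : ℝ) (hbound : ∀ t, ‖mulE (A t) ω₀‖ ≤ M)
    (μ₃p μ₃m : ℝ) (hμp : 0 < μ₃p) (hμm : 0 < μ₃m)
    (hLyapP : Tendsto (fun t => Real.log (lam3 t) / (2 * |t - t₀|)) atTop (nhds μ₃p))
    (hLyapM : Tendsto (fun t => Real.log (lam3 t) / (2 * |t - t₀|)) atBot (nhds μ₃m))
    (ζ₃p ζ₃m : EuclideanSpace ℝ (Fin 3))
    (hvecP : Tendsto xi3 atTop (nhds ζ₃p))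
    (hvecM : Tendsto xi3 atBot (nhds ζ₃m))
    (hnd : LinearIndependent ℝ ![ζ₃p, ζ₃m]) :
    ∃ c : ℝ, ω₀ = c • cross3 ζ₃p ζ₃m := by
  refine aux_cross _ _ _ hnd ?_ ?_
  · refine aux_orth t₀ ω₀ A lam3 xi3 hunit heig M hbound μ₃p hμp atTop ?_ hLyapP ζ₃p hvecP
    exact tendsto_abs_atTop_atTop.comp (tendsto_atTop_add_const_right _ (-t₀) tendsto_id)
  · refine aux_orth t₀ ω₀ A lam3 xi3 hunit heig M hbound μ₃m hμm atBot ?_ hLyapM ζ₃m hvecM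
    exact tendsto_abs_atBot_atTop.comp (tendsto_atBot_add_const_right _ (-t₀) tendsto_id)
end

section
/- (Remark 2, unbounded vorticity growth.) Fix t₀ ∈ ℝ and ω₀ ∈ ℝ³. Let A : [t₀, ∞) → GL(3, ℝ) with A(t₀) = Id, and for each t let λ₃(t) be the largest eigenvalue of A(t)ᵀA(t) with unit eigenvector ξ₃(t). Assume (1/(2(t−t₀))) log λ₃(t) → μ₃⁺ with 0 < μ₃⁺ < ∞ and ξ₃(t) → ζ₃⁺ as t → ∞. If ⟨ω₀, ζ₃⁺⟩ ≠ 0, then |A(t) ω₀| → ∞ as t → ∞. Consequently, in an inviscid flow with bounded vorticity along such a trajectory, the evolving vorticity ω(t) = A(t)ω₀ cannot align with the dominant left singular vector η₃(t); it must satisfy ⟨ω₀, ζ₃⁺⟩ = 0. -/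
open scoped RealInnerProductSpace
open Matrix MeasureTheory Filter

theorem mulE_inner_aux (A : Matrix (Fin 3) (Fin 3) ℝ) (x y : EuclideanSpace ℝ (Fin 3)) :
    ⟪mulE A x, mulE A y⟫ = ⟪x, mulE (Aᵀ * A) y⟫ := by
  have h : mulE (Aᵀ * A) y = Matrix.toEuclideanLin (Aᴴ) (Matrix.toEuclideanLin A y) := by
    simp [mulE, Matrix.toLpLin_apply, Matrix.mulVec_mulVec, Matrix.conjTranspose_eq_transpose_of_trivial]
  rw [h, Matrix.toEuclideanLin_conjTranspose_eq_adjoint, LinearMap.adjoint_inner_right]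
  rfl

/-- Remark 2, unbounded vorticity growth: if the maximal forward Lyapunov
exponent is positive, the dominant forward Lyapunov vector `ζ₃⁺` exists, and
`⟨ω₀, ζ₃⁺⟩ ≠ 0`, then `|A(t) ω₀| → ∞` as `t → ∞`. -/
theorem stmt_6 (t₀ : ℝ) (ω₀ : EuclideanSpace ℝ (Fin 3))
    (A : ℝ → Matrix (Fin 3) (Fin 3) ℝ)
    (hAinv : ∀ t, t₀ ≤ t → IsUnit (A t)) (hA0 : A t₀ = 1)
    (lam3 : ℝ → ℝ) (xi3 : ℝ → EuclideanSpace ℝ (Fin 3))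
    (hunit : ∀ t, t₀ ≤ t → ‖xi3 t‖ = 1)
    (heig : ∀ t, t₀ ≤ t → mulE ((A t)ᵀ * A t) (xi3 t) = lam3 t • xi3 t)
    (hmax : ∀ t, t₀ ≤ t → ∀ (μ : ℝ) (v : EuclideanSpace ℝ (Fin 3)), v ≠ 0 →
      mulE ((A t)ᵀ * A t) v = μ • v → μ ≤ lam3 t)
    (μ₃ : ℝ) (hμpos : 0 < μ₃)
    (hLyap : Tendsto (fun t => Real.log (lam3 t) / (2 * (t - t₀))) atTop (nhds μ₃))
    (ζ₃ : EuclideanSpace ℝ (Fin 3)) (hvec : Tendsto xi3 atTop (nhds ζ₃))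
    (hne : ⟪ω₀, ζ₃⟫ ≠ 0) :
    Tendsto (fun t => ‖mulE (A t) ω₀‖) atTop atTop := by
  have hlog : Tendsto (fun t => Real.log (lam3 t)) atTop atTop := by
    have h1 : Tendsto (fun t : ℝ => 2 * (t - t₀)) atTop atTop :=
      (tendsto_atTop_add_const_right _ (-t₀) tendsto_id).const_mul_atTop (by norm_num)
    refine (hLyap.pos_mul_atTop hμpos h1).congr' ?_
    filter_upwards [eventually_gt_atTop t₀] with t ht
    have : 2 * (t - t₀) ≠ 0 := by
      have := sub_pos.2 ht
      positivity
    exact div_mul_cancel₀ _ this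
  have hsq : ∀ t, t₀ ≤ t → ‖mulE (A t) (xi3 t)‖ ^ 2 = lam3 t := by
    intro t ht
    rw [← real_inner_self_eq_norm_sq, mulE_inner_aux, heig t ht, real_inner_smul_right,
      real_inner_self_eq_norm_sq, hunit t ht]
    ring
  have hlam : Tendsto lam3 atTop atTop := by
    refine tendsto_atTop_mono' _ ?_ hlog
    filter_upwards [eventually_ge_atTop t₀] with t ht
    exact Real.log_le_self (by rw [← hsq t ht]; positivity)
  have hin : Tendsto (fun t => |⟪ω₀, xi3 t⟫|) atTop (nhds |⟪ω₀, ζ₃⟫|) :=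
    (tendsto_const_nhds.inner hvec).abs
  have hs := hin.pos_mul_atTop (abs_pos.2 hne) (Real.tendsto_sqrt_atTop.comp hlam)
  refine tendsto_atTop_mono' _ ?_ hs
  filter_upwards [eventually_ge_atTop t₀, hlam.eventually_gt_atTop 0] with t ht hpos
  have hn : √(lam3 t) = ‖mulE (A t) (xi3 t)‖ := by
    rw [← hsq t ht, Real.sqrt_sq (norm_nonneg _)]
  have hnpos : 0 < ‖mulE (A t) (xi3 t)‖ := by
    rw [← hn]; exact Real.sqrt_pos.2 hpos
  have hcs := abs_real_inner_le_norm (mulE (A t) ω₀) (mulE (A t) (xi3 t))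
  rw [mulE_inner_aux, heig t ht, real_inner_smul_right, abs_mul, abs_of_pos hpos,
    ← hsq t ht] at hcs
  simp only [Function.comp, hn]
  refine le_of_mul_le_mul_right ?_ hnpos
  linarith
end
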